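/- The number of permutation tableaux contained in a k×(n-k) rectangle (with n-k columns) having exactly n-k ones (the minimum possible, one per column), summed over all k from 0 to n, equals the n-th Catalan number; equivalently, these tableaux are in bijection with permutations of {1,...,n} avoiding the generalized pattern (2-31). -/

import Mathlib

open Finset


def wexB {n : ℕ} (π : Equiv.Perm (Fin n)) : Finset (Fin n) :=
  Finset.univ.filter (fun i => i ≤ π i)

def wex {n : ℕ} (π : Equiv.Perm (Fin n)) : ℕ := (wexB π).card

def wexbotsum {n : ℕ} (π : Equiv.Perm (Fin n)) : ℕ := ∑ i ∈ wexB π, (i.val + 1)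

def wextopsum {n : ℕ} (π : Equiv.Perm (Fin n)) : ℕ := ∑ i ∈ wexB π, ((π i).val + 1)

def wexbotsSet {n : ℕ} (π : Equiv.Perm (Fin n)) : Finset ℕ :=
  (wexB π).image (fun i => i.val + 1)

def wextopsSet {n : ℕ} (π : Equiv.Perm (Fin n)) : Finset ℕ :=
  (wexB π).image (fun i => (π i).val + 1)

/-- `A_EE`: pairs `(i,j)` with `j < i ≤ π i < π j`. -/
def AEE {n : ℕ} (π : Equiv.Perm (Fin n)) : ℕ :=
  (Finset.univ.filter (fun p : Fin n × Fin n =>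
    p.2 < p.1 ∧ p.1 ≤ π p.1 ∧ π p.1 < π p.2)).card

/-- `A_NN`: pairs `(i,j)` with `π j < π i < i < j`. -/
def ANN {n : ℕ} (π : Equiv.Perm (Fin n)) : ℕ :=
  (Finset.univ.filter (fun p : Fin n × Fin n =>
    π p.2 < π p.1 ∧ π p.1 < p.1 ∧ p.1 < p.2)).card

/-- `A_EN`: pairs `(i,j)` with `j ≤ π j < π i < i`. -/
def AEN {n : ℕ} (π : Equiv.Perm (Fin n)) : ℕ :=
  (Finset.univ.filter (fun p : Fin n × Fin n =>
    p.2 ≤ π p.2 ∧ π p.2 < π p.1 ∧ π p.1 < p.1)).card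

/-- `A_NE`: pairs `(i,j)` with `π i < i < j ≤ π j`. -/
def ANE {n : ℕ} (π : Equiv.Perm (Fin n)) : ℕ :=
  (Finset.univ.filter (fun p : Fin n × Fin n =>
    π p.1 < p.1 ∧ p.1 < p.2 ∧ p.2 ≤ π p.2)).card

/-- `C_EE`: pairs `(i,j)` with `j < i ≤ π j < π i`. -/
def CEE {n : ℕ} (π : Equiv.Perm (Fin n)) : ℕ :=
  (Finset.univ.filter (fun p : Fin n × Fin n =>
    p.2 < p.1 ∧ p.1 ≤ π p.2 ∧ π p.2 < π p.1)).card

/-- `C_NN`: pairs `(i,j)` with `π i < π j < i < j`. -/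
def CNN {n : ℕ} (π : Equiv.Perm (Fin n)) : ℕ :=
  (Finset.univ.filter (fun p : Fin n × Fin n =>
    π p.1 < π p.2 ∧ π p.2 < p.1 ∧ p.1 < p.2)).card

def descents {n : ℕ} (π : Equiv.Perm (Fin n)) : Finset (Fin n) :=
  Finset.univ.filter (fun i => ∃ h : i.val + 1 < n, π ⟨i.val + 1, h⟩ < π i)

def des {n : ℕ} (π : Equiv.Perm (Fin n)) : ℕ := (descents π).card

def destopsum {n : ℕ} (π : Equiv.Perm (Fin n)) : ℕ :=
  ∑ i ∈ descents π, ((π i).val + 1)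

def desbotsum {n : ℕ} (π : Equiv.Perm (Fin n)) : ℕ :=
  ∑ i ∈ descents π, (if h : i.val + 1 < n then (π ⟨i.val + 1, h⟩).val + 1 else 0)

def destopsSet {n : ℕ} (π : Equiv.Perm (Fin n)) : Finset ℕ :=
  (descents π).image (fun i => (π i).val + 1)

def desbotsSet {n : ℕ} (π : Equiv.Perm (Fin n)) : Finset ℕ :=
  (descents π).image
    (fun i => if h : i.val + 1 < n then (π ⟨i.val + 1, h⟩).val + 1 else 0)

def maj {n : ℕ} (π : Equiv.Perm (Fin n)) : ℕ := ∑ i ∈ descents π, (i.val + 1)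

/-- Occurrences of the generalized pattern `(2-31)`. -/
def P2d31 {n : ℕ} (π : Equiv.Perm (Fin n)) : ℕ :=
  (Finset.univ.filter (fun p : Fin n × Fin n =>
    p.1 < p.2 ∧ ∃ h : p.2.val + 1 < n,
      π ⟨p.2.val + 1, h⟩ < π p.1 ∧ π p.1 < π p.2)).card

/-- Occurrences of the generalized pattern `(31-2)`. -/
def P31d2 {n : ℕ} (π : Equiv.Perm (Fin n)) : ℕ :=
  (Finset.univ.filter (fun p : Fin n × Fin n =>
    ∃ h : p.1.val + 1 < n, π ⟨p.1.val + 1, h⟩ < π p.1 ∧ p.1.val + 1 < p.2.val ∧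
      π ⟨p.1.val + 1, h⟩ < π p.2 ∧ π p.2 < π p.1)).card

/-- Occurrences of the generalized pattern `(21-3)`. -/
def P21d3 {n : ℕ} (π : Equiv.Perm (Fin n)) : ℕ :=
  (Finset.univ.filter (fun p : Fin n × Fin n =>
    ∃ h : p.1.val + 1 < n, π ⟨p.1.val + 1, h⟩ < π p.1 ∧ p.1.val + 1 < p.2.val ∧
      π p.1 < π p.2)).card

/-- Occurrences of the generalized pattern `(3-21)`. -/
def P3d21 {n : ℕ} (π : Equiv.Perm (Fin n)) : ℕ :=
  (Finset.univ.filter (fun p : Fin n × Fin n =>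
    p.1 < p.2 ∧ ∃ h : p.2.val + 1 < n,
      π ⟨p.2.val + 1, h⟩ < π p.2 ∧ π p.2 < π p.1)).card

/-- Occurrences of the generalized pattern `(1-32)`. -/
def P1d32 {n : ℕ} (π : Equiv.Perm (Fin n)) : ℕ :=
  (Finset.univ.filter (fun p : Fin n × Fin n =>
    p.1 < p.2 ∧ ∃ h : p.2.val + 1 < n,
      π ⟨p.2.val + 1, h⟩ < π p.2 ∧ π p.1 < π ⟨p.2.val + 1, h⟩)).card

/-- Occurrences of the generalized pattern `(32-1)`. -/
def P32d1 {n : ℕ} (π : Equiv.Perm (Fin n)) : ℕ :=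
  (Finset.univ.filter (fun p : Fin n × Fin n =>
    ∃ h : p.1.val + 1 < n, π ⟨p.1.val + 1, h⟩ < π p.1 ∧ p.1.val + 1 < p.2.val ∧
      π p.2 < π ⟨p.1.val + 1, h⟩)).card


/-- A permutation tableau with `n-k` columns, encoded as a `{0,1,2}`-filling of the full
`k × m` rectangle: the `2`'s are the boxes outside the Young diagram (southeast corner). -/
def IsPermTableau {k m : ℕ} (T : Fin k → Fin m → Fin 3) : Prop :=
  (∀ j : Fin m, ∃ i : Fin k, T i j = 1) ∧
  (∀ (i : Fin k) (j : Fin m), T i j ≠ 2 →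
    ∀ (i' : Fin k) (j' : Fin m), i' ≤ i → j' ≤ j → T i' j' ≠ 2) ∧
  (∀ (i : Fin k) (j : Fin m), T i j = 0 →
    ¬ ((∃ i' < i, T i' j = 1) ∧ (∃ j' < j, T i j' = 1)))

def rowLen {k m : ℕ} (T : Fin k → Fin m → Fin 3) (i : Fin k) : ℕ :=
  (Finset.univ.filter (fun j => T i j ≠ 2)).card

def zerosT {k m : ℕ} (T : Fin k → Fin m → Fin 3) : ℕ :=
  ∑ i, (Finset.univ.filter (fun j => T i j = 0)).card

def onesT {k m : ℕ} (T : Fin k → Fin m → Fin 3) : ℕ :=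
  ∑ i, (Finset.univ.filter (fun j => T i j = 1)).card

def twosT {k m : ℕ} (T : Fin k → Fin m → Fin 3) : ℕ :=
  ∑ i, (Finset.univ.filter (fun j => T i j = 2)).card

/-- A valid `0/1`-filling of the Young diagram with row lengths `lam`. -/
def ValidFilling {k : ℕ} (lam : Fin k → ℕ) (F : ∀ i : Fin k, Fin (lam i) → Bool) : Prop :=
  (∀ (i : Fin k) (j : Fin (lam i)), ∃ (i' : Fin k) (h : (j : ℕ) < lam i'), F i' ⟨j, h⟩ = true) ∧
  (∀ (i : Fin k) (j : Fin (lam i)), F i j = false →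
    ¬ ((∃ (i' : Fin k) (h : (j : ℕ) < lam i'), i' < i ∧ F i' ⟨j, h⟩ = true) ∧
       (∃ j' : Fin (lam i), j' < j ∧ F i j' = true)))

def fillZeros {k : ℕ} {lam : Fin k → ℕ} (F : ∀ i : Fin k, Fin (lam i) → Bool) : ℕ :=
  ∑ i, (Finset.univ.filter (fun j => F i j = false)).card

def fillOnes {k : ℕ} {lam : Fin k → ℕ} (F : ∀ i : Fin k, Fin (lam i) → Bool) : ℕ :=
  ∑ i, (Finset.univ.filter (fun j => F i j = true)).card

open Classical in
/-- `F_λ(p,q)`, evaluated at integers `p`, `q`: the sum over valid fillings of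
`p ^ (#0's) * q ^ (#1's)`. -/
noncomputable def Fval {k : ℕ} (lam : Fin k → ℕ) (p q : ℤ) : ℤ :=
  ∑ F ∈ Finset.univ.filter
      (fun F : ∀ i : Fin k, Fin (lam i) → Bool => ValidFilling lam F),
    p ^ fillZeros F * q ^ fillOnes F

/-!
Minimal tableaux and `(2-31)`-avoiding permutations both grow along the generating tree with root
`(0)` and succession rule `(h) ⇝ (1)(2)⋯(h + 1)`, whose generations are counted by the Catalan
numbers because the numbers of descendants obey the ballot recurrence.

A minimal tableau is labelled by its number `h` of unrestricted rows, those in which no `0` has a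
`1` above it. Its children are obtained by adding either an empty row at the bottom, which is
unrestricted, so that the label becomes `h + 1`, or a column of full length on the left. The `1`
of such a column has to lie in an unrestricted row, and the rows that stay unrestricted are those
weakly above it, so that the label takes each of the values `1, …, h` once. Conversely, the last
row of a tableau is either empty or forces the first column to have full length.

A permutation avoiding `(2-31)` grows by appending a last letter `v` and raising the letters `≥ v`
by one. If `a` was the last letter and `v < a`, then `v + 1`, `a + 1`, `v` is an occurrence of
`(2-31)`; if `v ≥ a`, then no occurrence is created.
-/

section SuccessionRule

/-- The succession rule `(h) ⇝ (1)(2)⋯(h + 1)` of the Catalan generating tree, acting on weights: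
`childSum w h` is the total weight of the children of a node labelled `h`. -/
def childSum (w : ℕ → ℕ) (h : ℕ) : ℕ := ∑ i ∈ range (h + 1), w (i + 1)

theorem childSum_zero (w : ℕ → ℕ) : childSum w 0 = w 1 := by
  simp [childSum]

theorem childSum_succ (w : ℕ → ℕ) (h : ℕ) : childSum w (h + 1) = childSum w h + w (h + 2) :=
  sum_range_succ _ _

/-- The ballot formula, without subtraction, for the number of descendants of a node labelled `h`
after `n + 1` generations. -/
theorem childSum_iterate_succ_one_add_choose (n h : ℕ) :
    childSum^[n + 1] 1 h + (2 * n + 2 + h).choose n = (2 * n + 2 + h).choose (n + 1) := by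
  induction n generalizing h with
  | zero =>
    simp only [zero_add, Function.iterate_one, childSum, Pi.one_apply, sum_const, card_range,
      smul_eq_mul, mul_one, mul_zero, Nat.choose_zero_right, Nat.choose_one_right]
    omega
  | succ n ihn =>
    rw [Function.iterate_succ_apply']
    induction h with
    | zero =>
      have hsymm : (2 * n + 3).choose (n + 1) = (2 * n + 3).choose (n + 1 + 1) :=
        Nat.choose_symm_of_eq_add (by ring)
      have hn : childSum^[n + 1] 1 1 + (2 * n + 3).choose n = (2 * n + 3).choose (n + 1) := ihn 1
      rw [childSum_zero, show 2 * (n + 1) + 2 + 0 = 2 * n + 3 + 1 by ring,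
        Nat.choose_succ_succ', Nat.choose_succ_succ' _ (n + 1)]
      omega
    | succ h ihh =>
      have hn := ihn (h + 2)
      rw [show 2 * (n + 1) + 2 + h = 2 * n + 2 + (h + 2) by ring] at ihh
      rw [childSum_succ, show 2 * (n + 1) + 2 + (h + 1) = 2 * n + 2 + (h + 2) + 1 by ring,
        Nat.choose_succ_succ', Nat.choose_succ_succ' _ (n + 1)]
      omega

theorem catalan_add_choose (n : ℕ) :
    catalan (n + 1) + (2 * n + 2).choose n = (2 * n + 2).choose (n + 1) := by
  have hcentral : (n + 2) * catalan (n + 1) = (2 * n + 2).choose (n + 1) :=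
    succ_mul_catalan_eq_centralBinom (n + 1)
  have habsorb : (2 * n + 2).choose (n + 1) * (n + 1) = (2 * n + 2).choose n * (n + 2) := by
    rw [Nat.choose_succ_right_eq, show 2 * n + 2 - n = n + 2 by omega]
  refine Nat.eq_of_mul_eq_mul_right (n + 1).succ_pos ?_
  rw [Nat.succ_eq_add_one]
  linear_combination hcentral - habsorb

theorem childSum_iterate_one_zero (n : ℕ) : childSum^[n] 1 0 = catalan n := by
  cases n with
  | zero => simp
  | succ n =>
    exact Nat.add_right_cancel
      ((childSum_iterate_succ_one_add_choose n 0).trans (catalan_add_choose n).symm)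

/-- `S n w` stands for the sum of `w` over the labels in the `n`-th generation of a generating tree
whose root is labelled `0`. -/
theorem eq_catalan_of_succession {S : ℕ → (ℕ → ℕ) → ℕ} (zero : ∀ w, S 0 w = w 0)
    (succ : ∀ n w, S (n + 1) w = S n (childSum w)) (n : ℕ) : S n 1 = catalan n := by
  have iterate (w : ℕ → ℕ) : S n w = childSum^[n] w 0 := by
    induction n generalizing w with
    | zero => exact zero w
    | succ n ih => rw [succ, ih, Function.iterate_succ_apply]
  rw [iterate, childSum_iterate_one_zero]

end SuccessionRule

section Sums

theorem sum_card_filter_le {α : Type*} [LinearOrder α] (s : Finset α) (w : ℕ → ℕ) :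
    ∑ r ∈ s, w #{i ∈ s | i ≤ r} = ∑ i ∈ range #s, w (i + 1) := by
  induction s using Finset.induction_on_max with
  | empty => simp
  | insert a s ha ih =>
    have ha' : a ∉ s := fun h ↦ (ha a h).false
    have htop : {i ∈ insert a s | i ≤ a} = insert a s :=
      filter_true_of_mem (forall_mem_insert .. |>.2 ⟨le_rfl, fun i hi ↦ (ha i hi).le⟩)
    have hrest : ∀ r ∈ s, {i ∈ insert a s | i ≤ r} = {i ∈ s | i ≤ r} := fun r hr ↦ by
      rw [filter_insert, if_neg (ha r hr).not_ge]
    rw [sum_insert ha', htop, card_insert_of_notMem ha', sum_range_succ, ← ih, add_comm]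
    congr 1
    exact sum_congr rfl fun r hr ↦ by rw [hrest r hr]

theorem sum_card_filter_ge {α : Type*} [LinearOrder α] (s : Finset α) (w : ℕ → ℕ) :
    ∑ r ∈ s, w #{i ∈ s | r ≤ i} = ∑ i ∈ range #s, w (i + 1) :=
  sum_card_filter_le (α := αᵒᵈ) s w

theorem sum_antidiagonal_succ_of_pascal {M : Type*} [AddCommMonoid M] {f a b : ℕ → ℕ → M}
    (zero_left : ∀ m, f 0 (m + 1) = b 0 m) (zero_right : ∀ k, f (k + 1) 0 = a k 0)
    (succ : ∀ k m, f (k + 1) (m + 1) = a k (m + 1) + b (k + 1) m) (n : ℕ) :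
    ∑ p ∈ antidiagonal (n + 1), f p.1 p.2 = ∑ p ∈ antidiagonal n, (a p.1 p.2 + b p.1 p.2) := by
  let b' (k m : ℕ) : M := m.casesOn 0 (b k)
  have hf (k m : ℕ) : f (k + 1) m = a k m + b' (k + 1) m := by
    cases m with
    | zero => simp [b', zero_right]
    | succ m => exact succ k m
  have hb' : ∑ p ∈ antidiagonal (n + 1), b' p.1 p.2 = ∑ p ∈ antidiagonal n, b p.1 p.2 := by
    simp [Nat.sum_antidiagonal_succ', b']
  rw [Nat.sum_antidiagonal_succ] at hb' ⊢
  simp only [hf, sum_add_distrib, zero_left, ← hb']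
  exact add_left_comm ..

end Sums

section Permutations

open Equiv

variable {n : ℕ}

/-- The permutation whose one-line notation is that of `σ`, with the letters `≥ v` raised by one,
followed by the letter `v`. -/
def appendLast (v : Fin (n + 1)) (σ : Perm (Fin n)) : Perm (Fin (n + 1)) :=
  (finSuccEquiv' (Fin.last n)).trans (σ.optionCongr.trans (finSuccEquiv' v).symm)

@[simp]
theorem appendLast_last (v : Fin (n + 1)) (σ : Perm (Fin n)) :
    appendLast v σ (Fin.last n) = v := by
  simp [appendLast]

@[simp]
theorem appendLast_castSucc (v : Fin (n + 1)) (σ : Perm (Fin n)) (i : Fin n) :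
    appendLast v σ i.castSucc = v.succAbove (σ i) := by
  rw [← Fin.succAbove_last_apply]
  simp [appendLast, -Fin.succAbove_last]

theorem appendLast_bijective :
    Function.Bijective fun p : Perm (Fin n) × Fin (n + 1) ↦ appendLast p.2 p.1 := by
  refine (Fintype.bijective_iff_injective_and_card _).2 ⟨?_, ?_⟩
  · rintro ⟨σ, v⟩ ⟨τ, v'⟩ (h : appendLast v σ = appendLast v' τ)
    obtain rfl : v = v' := by simpa using DFunLike.congr_fun h (Fin.last n)
    have hστ : σ = τ := Equiv.ext fun i ↦ by simpa using DFunLike.congr_fun h i.castSucc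
    rw [hστ]
  · simp [Fintype.card_perm, Nat.factorial_succ, mul_comm]

theorem P2d31_fin_zero (π : Perm (Fin 0)) : P2d31 π = 0 := by
  simp [P2d31]

theorem P2d31_eq_zero_iff {π : Perm (Fin (n + 1))} :
    P2d31 π = 0 ↔ ∀ j : Fin n, ∀ i < j.castSucc, π j.succ < π i → π j.castSucc ≤ π i := by
  simp only [P2d31, card_eq_zero, filter_eq_empty_iff, mem_univ, forall_const, Prod.forall]
  constructor
  · intro h j i hij hlt
    by_contra! hlt'
    exact h i j.castSucc ⟨hij, by simp, hlt, hlt'⟩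
  · rintro h i j ⟨hij, hj, hlt, hlt'⟩
    exact hlt'.not_ge (h ⟨j, by omega⟩ i hij hlt)

/-- The least letter whose insertion at the end of `σ` by `appendLast` creates no new occurrence of
`(2-31)`. In the generating tree, `σ` is labelled `n - leastAppendable σ`, one less than its number
of children. -/
def leastAppendable : {n : ℕ} → Perm (Fin n) → Fin (n + 1)
  | 0, _ => 0
  | n + 1, σ => (σ (Fin.last n)).castSucc

theorem leastAppendable_appendLast (v : Fin (n + 1)) (σ : Perm (Fin n)) :
    leastAppendable (appendLast v σ) = v.castSucc := by
  simp [leastAppendable]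

theorem forall_lt_castSucc_iff {i : Fin n} {p : Fin (n + 1) → Prop} :
    (∀ k < i.castSucc, p k) ↔ ∀ k < i, p k.castSucc := by
  simp [Fin.forall_fin_succ', (Fin.castSucc_lt_last i).not_gt]

theorem P2d31_appendLast_eq_zero_iff {v : Fin (n + 1)} {σ : Perm (Fin n)} :
    P2d31 (appendLast v σ) = 0 ↔ P2d31 σ = 0 ∧ leastAppendable σ ≤ v := by
  cases n with
  | zero => simp [P2d31_eq_zero_iff, leastAppendable, P2d31_fin_zero]
  | succ n =>
    have hlast : (∀ i < Fin.last n, v ≤ (σ i).castSucc → σ (Fin.last n) ≤ σ i) ↔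
        (σ (Fin.last n)).castSucc ≤ v := by
      constructor
      · intro h
        by_contra! hv
        obtain ⟨u, rfl⟩ := Fin.exists_castSucc_eq.2 (hv.trans_le (Fin.le_last _)).ne
        obtain ⟨i, rfl⟩ := σ.surjective u
        have hi : i ≠ Fin.last n := by rintro rfl; exact hv.false
        exact hv.not_ge (h i (Fin.lt_last_iff_ne_last.2 hi) le_rfl)
      · exact fun h i _ hi ↦ Fin.castSucc_le_castSucc_iff.1 (h.trans hi)
    rw [P2d31_eq_zero_iff, P2d31_eq_zero_iff, leastAppendable, ← hlast, Fin.forall_fin_succ']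
    simp only [forall_lt_castSucc_iff, Fin.succ_castSucc, Fin.succ_last, appendLast_castSucc,
      appendLast_last, Fin.succAbove_lt_succAbove_iff, Fin.succAbove_le_succAbove_iff,
      Fin.lt_succAbove_iff_le_castSucc]

theorem sum_Ici_eq_childSum (a : Fin (n + 1)) (w : ℕ → ℕ) :
    ∑ v ∈ Ici a, w (n + 1 - v) = childSum w (n - a) := by
  have hcard (v) (hv : v ∈ Ici a) : #{i ∈ Ici a | v ≤ i} = n + 1 - v := by
    have hIci : {i ∈ Ici a | v ≤ i} = Ici v := by
      ext
      simpa using (mem_Ici.1 hv).trans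
    rw [hIci, Fin.card_Ici]
  calc
    ∑ v ∈ Ici a, w (n + 1 - v) = ∑ v ∈ Ici a, w #{i ∈ Ici a | v ≤ i} :=
      sum_congr rfl fun v hv ↦ by rw [hcard v hv]
    _ = ∑ i ∈ range #(Ici a), w (i + 1) := sum_card_filter_ge _ _
    _ = childSum w (n - a) := by rw [Fin.card_Ici, Nat.sub_add_comm a.is_le, childSum]

theorem sum_avoiders_succ (w : ℕ → ℕ) :
    ∑ π : Perm (Fin (n + 1)) with P2d31 π = 0, w (n + 1 - leastAppendable π) =
      ∑ σ : Perm (Fin n) with P2d31 σ = 0, childSum w (n - leastAppendable σ) := by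
  calc
    _ = ∑ σ : Perm (Fin n), ∑ v : Fin (n + 1),
        if P2d31 σ = 0 ∧ leastAppendable σ ≤ v then w (n + 1 - v) else 0 := by
      rw [sum_filter, ← appendLast_bijective.sum_comp, Fintype.sum_prod_type]
      simp only [P2d31_appendLast_eq_zero_iff, leastAppendable_appendLast, Fin.val_castSucc]
    _ = ∑ σ : Perm (Fin n) with P2d31 σ = 0, ∑ v ∈ Ici (leastAppendable σ), w (n + 1 - v) := by
      simp only [ite_and, sum_ite_irrel, sum_const_zero, ← sum_filter, filter_le_eq_Ici]
    _ = _ := by simp only [sum_Ici_eq_childSum]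

theorem card_avoiders_eq_catalan (n : ℕ) :
    #{π : Perm (Fin n) | P2d31 π = 0} = catalan n := by
  rw [← eq_catalan_of_succession
    (S := fun n w ↦ ∑ π : Perm (Fin n) with P2d31 π = 0, w (n - leastAppendable π))
    (fun w ↦ by simp [P2d31_fin_zero]) (fun n w ↦ sum_avoiders_succ w), card_eq_sum_ones]
  rfl

end Permutations
section Tableaux

variable {k m : ℕ} {T : Fin k → Fin m → Fin 3} {r : Fin k}

/-- A permutation tableau with the least possible number of ones, namely one per column. -/
def IsMinPermTableau (T : Fin k → Fin m → Fin 3) : Prop :=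
  IsPermTableau T ∧ ∀ j, ∃! i, T i j = 1

theorem onesT_eq_sum_columns (T : Fin k → Fin m → Fin 3) : onesT T = ∑ j, #{i | T i j = 1} := by
  simp only [onesT, card_filter]
  exact sum_comm

theorem isMinPermTableau_iff_onesT : IsMinPermTableau T ↔ IsPermTableau T ∧ onesT T = m := by
  refine and_congr_right fun hT ↦ ?_
  have hcol (j : Fin m) : 1 ≤ #{i | T i j = 1} :=
    card_pos.2 ((hT.1 j).imp fun i hi ↦ by simpa using hi)
  have hm : onesT T = m ↔ ∑ _j : Fin m, 1 = ∑ j, #{i | T i j = 1} := by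
    simp [onesT_eq_sum_columns, eq_comm]
  rw [hm, sum_eq_sum_iff_of_le fun j _ ↦ hcol j]
  simp [eq_comm (a := 1), card_eq_one_iff_existsUnique]

/-- The tableau `T` with a row of length zero added at the bottom. -/
def addEmptyRow (T : Fin k → Fin m → Fin 3) : Fin (k + 1) → Fin m → Fin 3 :=
  Fin.snoc (α := fun _ ↦ Fin m → Fin 3) T fun _ ↦ 2

/-- The tableau `T` with a column of length `k` added on the left, whose single `1` lies in
row `r`. -/
def addFullColumn (r : Fin k) (T : Fin k → Fin m → Fin 3) : Fin k → Fin (m + 1) → Fin 3 :=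
  fun i ↦ Fin.cons (if i = r then 1 else 0) (T i)

/-- The unrestricted rows of `T`, namely those in which no `0` has a `1` above it. -/
def unrestrictedRows (T : Fin k → Fin m → Fin 3) : Finset (Fin k) :=
  {i | ∀ j, T i j = 0 → ∀ i' < i, T i' j ≠ 1}

theorem addEmptyRow_castSucc (T : Fin k → Fin m → Fin 3) (i : Fin k) :
    addEmptyRow T i.castSucc = T i := by
  simp [addEmptyRow]

theorem addEmptyRow_last (T : Fin k → Fin m → Fin 3) (j : Fin m) :
    addEmptyRow T (Fin.last k) j = 2 := by
  simp [addEmptyRow]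

theorem addFullColumn_zero_eq_one_iff {i : Fin k} : addFullColumn r T i 0 = 1 ↔ i = r := by
  simp [addFullColumn]

theorem addFullColumn_zero_eq_zero_iff {i : Fin k} : addFullColumn r T i 0 = 0 ↔ i ≠ r := by
  simp [addFullColumn]

theorem addFullColumn_zero_ne_two {i : Fin k} : addFullColumn r T i 0 ≠ 2 := by
  simp only [addFullColumn, Fin.cons_zero]
  split_ifs <;> decide

theorem addFullColumn_succ (i : Fin k) (j : Fin m) : addFullColumn r T i j.succ = T i j :=
  rfl

theorem isMinPermTableau_addEmptyRow : IsMinPermTableau (addEmptyRow T) ↔ IsMinPermTableau T := by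
  simp [IsMinPermTableau, IsPermTableau, ExistsUnique, Fin.forall_fin_succ', Fin.exists_fin_succ',
    addEmptyRow_castSucc, addEmptyRow_last]

theorem isPermTableau_addFullColumn : IsPermTableau (addFullColumn r T) ↔
    IsPermTableau T ∧ r ∈ unrestrictedRows T := by
  have hcolumns : (∀ j, ∃ i, addFullColumn r T i j = 1) ↔ ∀ j, ∃ i, T i j = 1 := by
    simp [Fin.forall_fin_succ, addFullColumn_zero_eq_one_iff, addFullColumn_succ]
  have hshape : (∀ i j, addFullColumn r T i j ≠ 2 →
        ∀ i' j', i' ≤ i → j' ≤ j → addFullColumn r T i' j' ≠ 2) ↔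
      ∀ i j, T i j ≠ 2 → ∀ i' j', i' ≤ i → j' ≤ j → T i' j' ≠ 2 := by
    simp [Fin.forall_fin_succ, addFullColumn_zero_ne_two, addFullColumn_succ]
  have hleft (i : Fin k) (j : Fin m) : (∃ j' < j.succ, addFullColumn r T i j' = 1) ↔
      i = r ∨ ∃ j' < j, T i j' = 1 := by
    simp [Fin.exists_fin_succ, addFullColumn_zero_eq_one_iff, addFullColumn_succ]
  have hzeros : (∀ i j, addFullColumn r T i j = 0 → ¬ ((∃ i' < i, addFullColumn r T i' j = 1) ∧
        ∃ j' < j, addFullColumn r T i j' = 1)) ↔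
      (∀ i j, T i j = 0 → ¬ ((∃ i' < i, T i' j = 1) ∧ ∃ j' < j, T i j' = 1)) ∧
        r ∈ unrestrictedRows T := by
    simp only [Fin.forall_fin_succ, hleft, addFullColumn_succ, not_lt_zero, unrestrictedRows,
      mem_filter_univ]
    grind
  rw [IsPermTableau, hcolumns, hshape, hzeros, IsPermTableau, and_assoc, and_assoc]

theorem isMinPermTableau_addFullColumn : IsMinPermTableau (addFullColumn r T) ↔
    IsMinPermTableau T ∧ r ∈ unrestrictedRows T := by
  simp [IsMinPermTableau, isPermTableau_addFullColumn, Fin.forall_fin_succ,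
    addFullColumn_succ, addFullColumn_zero_eq_one_iff, and_right_comm]

theorem unrestrictedRows_addEmptyRow (T : Fin k → Fin m → Fin 3) :
    unrestrictedRows (addEmptyRow T) =
      insert (Fin.last k) ((unrestrictedRows T).map Fin.castSuccEmb) := by
  ext i
  cases i using Fin.lastCases <;>
    simp [unrestrictedRows, addEmptyRow_castSucc, addEmptyRow_last, forall_lt_castSucc_iff]

theorem card_unrestrictedRows_addEmptyRow (T : Fin k → Fin m → Fin 3) :
    #(unrestrictedRows (addEmptyRow T)) = #(unrestrictedRows T) + 1 := by
  rw [unrestrictedRows_addEmptyRow, card_insert_of_notMem (by simp), card_map]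

theorem unrestrictedRows_addFullColumn (r : Fin k) (T : Fin k → Fin m → Fin 3) :
    unrestrictedRows (addFullColumn r T) = {i ∈ unrestrictedRows T | i ≤ r} := by
  ext i
  have hnew : (addFullColumn r T i 0 = 0 → ∀ i' < i, addFullColumn r T i' 0 ≠ 1) ↔ i ≤ r := by
    simp only [addFullColumn_zero_eq_zero_iff, ne_eq, addFullColumn_zero_eq_one_iff]
    grind
  simp only [unrestrictedRows, Fin.forall_fin_succ, hnew, addFullColumn_succ, mem_filter,
    mem_univ, true_and, and_comm]

theorem addEmptyRow_injective : Function.Injective (addEmptyRow (k := k) (m := m)) :=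
  fun S T h ↦ funext fun i ↦ by simpa only [addEmptyRow_castSucc] using congrFun h i.castSucc

theorem exists_eq_addEmptyRow {T : Fin (k + 1) → Fin m → Fin 3} (h : ∀ j, T (Fin.last k) j = 2) :
    ∃ S, T = addEmptyRow S :=
  ⟨Fin.init T, by rw [addEmptyRow, ← funext h, Fin.snoc_init_self]⟩

theorem addFullColumn_injective : Function.Injective
    fun p : (_ : Fin k → Fin m → Fin 3) × Fin k ↦ addFullColumn p.2 p.1 := by
  rintro ⟨S, r⟩ ⟨T, r'⟩ (h : addFullColumn r S = addFullColumn r' T)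
  obtain rfl : S = T := funext₂ fun i j ↦ congrFun₂ h i j.succ
  obtain rfl : r = r' := by
    rw [← addFullColumn_zero_eq_one_iff (T := S), ← h, addFullColumn_zero_eq_one_iff]
  rfl

theorem IsMinPermTableau.exists_eq_addFullColumn {T : Fin (k + 1) → Fin (m + 1) → Fin 3}
    (hT : IsMinPermTableau T) {j : Fin (m + 1)} (hj : T (Fin.last k) j ≠ 2) :
    ∃ r S, T = addFullColumn r S := by
  obtain ⟨r, hr, hr'⟩ := hT.2 0
  refine ⟨r, fun i ↦ Fin.tail (T i), funext fun i ↦ ?_⟩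
  have hzero : T i 0 = if i = r then 1 else 0 := by
    have htwo : T i 0 ≠ 2 := hT.1.2.1 _ _ hj i 0 (Fin.le_last i) (Fin.zero_le j)
    grind
  rw [addFullColumn, ← hzero, Fin.cons_self_tail]

open Classical in
/-- The total weight of the minimal tableaux with `k` rows and `m` columns, a tableau being weighted
by its number of unrestricted rows. -/
noncomputable def rowWeightSum (k m : ℕ) (w : ℕ → ℕ) : ℕ :=
  ∑ T : Fin k → Fin m → Fin 3 with IsMinPermTableau T, w #(unrestrictedRows T)

theorem rowWeightSum_zero_zero (w : ℕ → ℕ) : rowWeightSum 0 0 w = w 0 := by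
  simp [rowWeightSum, IsMinPermTableau, IsPermTableau, unrestrictedRows]

theorem rowWeightSum_zero_succ (m : ℕ) (w : ℕ → ℕ) : rowWeightSum 0 (m + 1) w = 0 := by
  simp [rowWeightSum, IsMinPermTableau, IsPermTableau]

theorem rowWeightSum_zero_left {w : ℕ → ℕ} (hw : w 0 = 0) : rowWeightSum 0 m w = 0 := by
  simp [rowWeightSum, hw, unrestrictedRows]

open Classical in
theorem sum_lastRow_empty (k m : ℕ) (w : ℕ → ℕ) :
    ∑ T : Fin (k + 1) → Fin m → Fin 3 with IsMinPermTableau T ∧ ∀ j, T (Fin.last k) j = 2,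
      w #(unrestrictedRows T) = rowWeightSum k m (fun h ↦ w (h + 1)) := by
  symm
  refine sum_nbij addEmptyRow ?_ addEmptyRow_injective.injOn ?_ ?_
  · simp [isMinPermTableau_addEmptyRow, addEmptyRow_last]
  · intro T hT
    obtain ⟨-, hT, hlast⟩ := mem_filter.1 hT
    obtain ⟨S, rfl⟩ := exists_eq_addEmptyRow hlast
    exact ⟨S, by simpa [isMinPermTableau_addEmptyRow] using hT, rfl⟩
  · simp [card_unrestrictedRows_addEmptyRow]

open Classical in
theorem sum_lastRow_nonempty (k m : ℕ) (w : ℕ → ℕ) :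
    ∑ T : Fin (k + 1) → Fin (m + 1) → Fin 3 with
        IsMinPermTableau T ∧ ¬ ∀ j, T (Fin.last k) j = 2, w #(unrestrictedRows T) =
      rowWeightSum (k + 1) m (fun h ↦ ∑ i ∈ range h, w (i + 1)) := by
  simp only [rowWeightSum, ← sum_card_filter_le, ← unrestrictedRows_addFullColumn]
  rw [sum_sigma']
  symm
  refine sum_nbij (fun p ↦ addFullColumn p.2 p.1) ?_ addFullColumn_injective.injOn ?_ fun _ _ ↦ rfl
  · rintro ⟨S, r⟩ hS
    simp only [mem_sigma, mem_filter, mem_univ, true_and] at hS ⊢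
    exact ⟨isMinPermTableau_addFullColumn.2 hS, fun h ↦ addFullColumn_zero_ne_two (h 0)⟩
  · intro T hT
    obtain ⟨-, hT, hlast⟩ := mem_filter.1 hT
    obtain ⟨j, hj⟩ := not_forall.1 hlast
    obtain ⟨r, S, rfl⟩ := hT.exists_eq_addFullColumn hj
    exact ⟨⟨S, r⟩, by simpa [isMinPermTableau_addFullColumn] using hT, rfl⟩

theorem rowWeightSum_succ_zero (k : ℕ) (w : ℕ → ℕ) :
    rowWeightSum (k + 1) 0 w = rowWeightSum k 0 (fun h ↦ w (h + 1)) := by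
  classical
  rw [← sum_lastRow_empty, rowWeightSum]
  simp only [IsEmpty.forall_iff, and_true]

theorem rowWeightSum_succ_succ (k m : ℕ) (w : ℕ → ℕ) :
    rowWeightSum (k + 1) (m + 1) w = rowWeightSum k (m + 1) (fun h ↦ w (h + 1)) +
      rowWeightSum (k + 1) m (fun h ↦ ∑ i ∈ range h, w (i + 1)) := by
  rw [← sum_lastRow_empty, ← sum_lastRow_nonempty, rowWeightSum]
  simp only [← filter_filter]
  exact (sum_filter_add_sum_filter_not _ _ _).symm

theorem sum_rowWeightSum_succ (n : ℕ) (w : ℕ → ℕ) :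
    ∑ p ∈ antidiagonal (n + 1), rowWeightSum p.1 p.2 w =
      ∑ p ∈ antidiagonal n, rowWeightSum p.1 p.2 (childSum w) := by
  rw [sum_antidiagonal_succ_of_pascal (f := (rowWeightSum · · w))
    (a := (rowWeightSum · · fun h ↦ w (h + 1)))
    (b := (rowWeightSum · · fun h ↦ ∑ i ∈ range h, w (i + 1))) (fun m ↦ ?_)
    (rowWeightSum_succ_zero · w) (rowWeightSum_succ_succ · · w)]
  · simp only [rowWeightSum, ← sum_add_distrib, childSum, sum_range_succ, add_comm]
  · rw [rowWeightSum_zero_succ, rowWeightSum_zero_left (sum_range_zero _)]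

theorem sum_card_minPermTableaux_eq_catalan (n : ℕ) :
    ∑ k ∈ range (n + 1), Nat.card {T : Fin k → Fin (n - k) → Fin 3 // IsMinPermTableau T} =
      catalan n := by
  classical
  rw [← eq_catalan_of_succession (S := fun n w ↦ ∑ p ∈ antidiagonal n, rowWeightSum p.1 p.2 w)
    (by simp [rowWeightSum_zero_zero]) sum_rowWeightSum_succ,
    Nat.sum_antidiagonal_eq_sum_range_succ (rowWeightSum · · 1)]
  simp [rowWeightSum, Nat.card_eq_fintype_card, Fintype.card_subtype]

end Tableaux

theorem minimal_ones_tableaux_catalan (n : ℕ) :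
    (∑ k ∈ Finset.range (n + 1),
      Nat.card {T : Fin k → Fin (n - k) → Fin 3 //
        IsPermTableau T ∧ onesT T = n - k}) = catalan n ∧
    (∑ k ∈ Finset.range (n + 1),
      Nat.card {T : Fin k → Fin (n - k) → Fin 3 //
        IsPermTableau T ∧ onesT T = n - k}) =
      (Finset.univ.filter (fun π : Equiv.Perm (Fin n) => P2d31 π = 0)).card := by
  have htableaux : (∑ k ∈ Finset.range (n + 1),
      Nat.card {T : Fin k → Fin (n - k) → Fin 3 //
        IsPermTableau T ∧ onesT T = n - k}) = catalan n := by
    simp only [← isMinPermTableau_iff_onesT, sum_card_minPermTableaux_eq_catalan]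
  exact ⟨htableaux, htableaux.trans (card_avoiders_eq_catalan n).symm⟩
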